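/- arXiv:2602.23311 — 6 statements merged into one kernel-verified Lean document; each statement's English description precedes it below -/
import Mathlib

section
/- For every unconstrained coefficient vector β ∈ ℝ^D, the transformation H satisfies H(k_1) = k_1. -/
open MeasureTheory Finset

noncomputable section

/-- The cardinal cubic B-spline. -/
def cubicN (t : ℝ) : ℝ :=
  if 0 ≤ t ∧ t < 1 then t ^ 3 / 6
  else if 1 ≤ t ∧ t < 2 then (-3 * t ^ 3 + 12 * t ^ 2 - 12 * t + 4) / 6
  else if 2 ≤ t ∧ t < 3 then (3 * t ^ 3 - 24 * t ^ 2 + 60 * t - 44) / 6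
  else if 3 ≤ t ∧ t ≤ 4 then (4 - t) ^ 3 / 6
  else 0

/-- Equidistant knots `k_j = k0 + j·k`. -/
def knot (k0 k : ℝ) (j : ℤ) : ℝ := k0 + (j : ℝ) * k

/-- Cubic B-spline basis functions `B_j(x) = N((x − k_{j−3})/k)` for `j = 1, …, J`. -/
def Bspl (k0 k : ℝ) (j : ℕ) (x : ℝ) : ℝ := cubicN ((x - knot k0 k ((j : ℤ) - 3)) / k)

/-- The coefficients `γ_1, …, γ_J` (with `J = D + 7`, `m = D + 5`), defined from the
unconstrained vector `β ∈ ℝ^D`. -/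
def gam (D : ℕ) (k0 k : ℝ) (β : Fin D → ℝ) (j : ℕ) : ℝ :=
  if j = 1 then k0
  else if j = 2 ∨ j = 3 ∨ j = 4 ∨ j = D + 5 ∨ j = D + 6 ∨ j = D + 7 then Real.log k
  else if h : 5 ≤ j ∧ j ≤ D + 4 then
    β ⟨j - 5, by omega⟩ - Real.log ((∑ d, Real.exp (β d)) / ((D : ℝ) * k))
  else 0

/-- The transformation `H`: a cubic B-spline with coefficients
`γ_1 + ∑_{ℓ=2}^j exp(γ_ℓ)` on `[k_1, k_m]` (with `m = D + 5`), and the identity outside. -/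
def Hfun (D : ℕ) (k0 k : ℝ) (β : Fin D → ℝ) (x : ℝ) : ℝ :=
  if knot k0 k 1 ≤ x ∧ x ≤ knot k0 k ((D : ℤ) + 5) then
    ∑ j ∈ Finset.Icc 1 (D + 7),
      Bspl k0 k j x * (gam D k0 k β 1 + ∑ l ∈ Finset.Icc 2 j, Real.exp (gam D k0 k β l))
  else x


/-- For every unconstrained coefficient vector `β ∈ ℝ^D`, the
transformation `H` satisfies `H(k_1) = k_1`. -/
theorem H_passes_through_k1 (D : ℕ) (hD : 1 ≤ D) (k0 k : ℝ) (hk : 0 < k)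
    (β : Fin D → ℝ) :
    Hfun D k0 k β (knot k0 k 1) = knot k0 k 1 := by
  have hB : ∀ j : ℕ, Bspl k0 k j (knot k0 k 1) = cubicN (4 - (j : ℝ)) := by
    intro j
    unfold Bspl knot
    congr 1
    push_cast
    field_simp
    ring
  have hcond : knot k0 k 1 ≤ knot k0 k 1 ∧ knot k0 k 1 ≤ knot k0 k ((D : ℤ) + 5) := by
    refine ⟨le_rfl, ?_⟩
    unfold knot
    push_cast
    have : (0 : ℝ) ≤ (D : ℝ) * k := by positivity
    linarith
  unfold Hfun
  rw [if_pos hcond]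
  have hsub : Finset.Icc 1 3 ⊆ Finset.Icc 1 (D + 7) := by
    apply Finset.Icc_subset_Icc <;> omega
  rw [← Finset.sum_subset hsub]
  · have h13 : Finset.Icc 1 3 = ({1, 2, 3} : Finset ℕ) := by decide
    have h21 : Finset.Icc 2 1 = (∅ : Finset ℕ) := by decide
    have h22 : Finset.Icc 2 2 = ({2} : Finset ℕ) := by decide
    have h23 : Finset.Icc 2 3 = ({2, 3} : Finset ℕ) := by decide
    have g1 : gam D k0 k β 1 = k0 := by simp [gam]
    have g2 : gam D k0 k β 2 = Real.log k := by simp [gam]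
    have g3 : gam D k0 k β 3 = Real.log k := by simp [gam]
    have c1 : cubicN (4 - ((1 : ℕ) : ℝ)) = 1 / 6 := by norm_num [cubicN]
    have c2 : cubicN (4 - ((2 : ℕ) : ℝ)) = 4 / 6 := by norm_num [cubicN]
    have c3 : cubicN (4 - ((3 : ℕ) : ℝ)) = 1 / 6 := by norm_num [cubicN]
    rw [h13, Finset.sum_insert (by decide), Finset.sum_insert (by decide), Finset.sum_singleton,
      h21, h22, h23, Finset.sum_empty, Finset.sum_singleton, Finset.sum_insert (by decide),
      Finset.sum_singleton, hB, hB, hB, c1, c2, c3, g1, g2, g3, Real.exp_log hk]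
    unfold knot
    push_cast
    ring
  · intro j hj hj3
    have h4 : 4 ≤ j := by
      simp only [Finset.mem_Icc] at hj hj3
      omega
    have h4r : (4 : ℝ) ≤ (j : ℝ) := by exact_mod_cast h4
    have hz : cubicN (4 - (j : ℝ)) = 0 := by
      rcases h4r.eq_or_lt with h | h
      · rw [← h]
        norm_num [cubicN]
      · unfold cubicN
        rw [if_neg (by rintro ⟨a, _⟩; linarith), if_neg (by rintro ⟨a, _⟩; linarith),
          if_neg (by rintro ⟨a, _⟩; linarith), if_neg (by rintro ⟨a, _⟩; linarith)]
    rw [hB, hz, zero_mul]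

end
end

section
/- For every unconstrained coefficient vector β ∈ ℝ^D and every x ∈ [k_1, a] ∪ [b, k_m], the transformation H is differentiable at x with derivative H′(x) = 1. -/
open MeasureTheory Finset

noncomputable section

lemma cubicN_zero (t : ℝ) (h : t ≤ 0 ∨ 4 ≤ t) : cubicN t = 0 := by
  unfold cubicN
  rcases h with h | h
  · rcases h.lt_or_eq with h | rfl
    · split_ifs <;> first | rfl | (exfalso; grind)
    · norm_num
  · rcases h.lt_or_eq with h | rfl
    · split_ifs <;> first | rfl | (exfalso; grind)
    · norm_num

lemma cubicN_p0 (s : ℝ) (h0 : 0 ≤ s) (h1 : s ≤ 1) : cubicN s = s ^ 3 / 6 := by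
  unfold cubicN
  rcases h1.lt_or_eq with h | rfl
  · rw [if_pos ⟨h0, h⟩]
  · norm_num

lemma cubicN_p1 (s : ℝ) (h0 : 0 ≤ s) (h1 : s ≤ 1) :
    cubicN (s + 1) = (-3 * (s+1) ^ 3 + 12 * (s+1) ^ 2 - 12 * (s+1) + 4) / 6 := by
  unfold cubicN
  rcases h1.lt_or_eq with h | rfl
  · rw [if_neg (by grind), if_pos (by grind)]
  · norm_num

lemma cubicN_p2 (s : ℝ) (h0 : 0 ≤ s) (h1 : s ≤ 1) :
    cubicN (s + 2) = (3 * (s+2) ^ 3 - 24 * (s+2) ^ 2 + 60 * (s+2) - 44) / 6 := by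
  unfold cubicN
  rcases h1.lt_or_eq with h | rfl
  · rw [if_neg (by grind), if_neg (by grind), if_pos (by grind)]
  · norm_num

lemma cubicN_p3 (s : ℝ) (h0 : 0 ≤ s) (h1 : s ≤ 1) :
    cubicN (s + 3) = (1 - s) ^ 3 / 6 := by
  unfold cubicN
  rw [if_neg (by grind), if_neg (by grind), if_neg (by grind), if_pos (by grind)]
  ring

lemma cubicN_bd (t : ℝ) : 0 ≤ cubicN t ∧ cubicN t ≤ t ^ 2 ∧ cubicN t ≤ (t - 4) ^ 2 := by
  by_cases h : t ≤ 0 ∨ 4 ≤ t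
  · rw [cubicN_zero t h]; exact ⟨le_rfl, sq_nonneg _, sq_nonneg _⟩
  push Not at h
  obtain ⟨h0, h4⟩ := h
  by_cases h1 : t ≤ 1
  · rw [cubicN_p0 t h0.le h1]
    have : t ^ 3 ≤ t ^ 2 := by nlinarith [sq_nonneg t]
    refine ⟨by positivity, by nlinarith, by nlinarith⟩
  by_cases h2 : t ≤ 2
  · obtain ⟨s, rfl⟩ : ∃ s, t = s + 1 := ⟨t - 1, by ring⟩
    have a0 : 0 ≤ s := by linarith
    have a1 : s ≤ 1 := by linarith
    rw [cubicN_p1 s a0 a1]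
    have b1 : s ^ 3 ≤ s ^ 2 := by nlinarith [sq_nonneg s]
    have b2 : 0 ≤ s ^ 3 := by positivity
    refine ⟨by nlinarith, by nlinarith, by nlinarith⟩
  by_cases h3 : t ≤ 3
  · obtain ⟨s, rfl⟩ : ∃ s, t = s + 2 := ⟨t - 2, by ring⟩
    have a0 : 0 ≤ s := by linarith
    have a1 : s ≤ 1 := by linarith
    rw [cubicN_p2 s a0 a1]
    have b1 : s ^ 3 ≤ s ^ 2 := by nlinarith [sq_nonneg s]
    have b2 : 0 ≤ s ^ 3 := by positivity
    refine ⟨by nlinarith, by nlinarith, by nlinarith⟩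
  · obtain ⟨s, rfl⟩ : ∃ s, t = (1 - s) + 3 := ⟨4 - t, by ring⟩
    have a0 : 0 ≤ s := by linarith
    have a1 : s ≤ 1 := by linarith
    rw [cubicN_p3 _ (by linarith) (by linarith)]
    have b1 : s ^ 3 ≤ s ^ 2 := by nlinarith [sq_nonneg s]
    have b2 : 0 ≤ s ^ 3 := by positivity
    refine ⟨by nlinarith, by nlinarith, by nlinarith⟩

lemma cubicN_deriv (a : ℝ) (h : a ≤ 0 ∨ 4 ≤ a) : HasDerivAt cubicN 0 a := by
  have hO : cubicN =O[nhds a] fun t => ‖t - a‖ ^ 2 := by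
    apply Asymptotics.IsBigO.of_bound 1
    filter_upwards with t
    obtain ⟨h0, h1, h2⟩ := cubicN_bd t
    rw [Real.norm_eq_abs, abs_of_nonneg h0, Real.norm_eq_abs, Real.norm_eq_abs, sq_abs,
      abs_of_nonneg (sq_nonneg _), one_mul]
    by_cases ht : t ≤ 0 ∨ 4 ≤ t
    · rw [cubicN_zero t ht]; exact sq_nonneg _
    push Not at ht
    rcases h with h | h
    · nlinarith
    · nlinarith
  have := (hO.hasFDerivAt (by norm_num)).hasDerivAt
  simpa using this

lemma greville (D : ℕ) (k0 k : ℝ) (hk : 0 < k) (y : ℝ)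
    (h1 : knot k0 k 1 ≤ y) (h2 : y ≤ knot k0 k ((D : ℤ) + 5)) :
    ∑ j ∈ Finset.Icc 1 (D + 7), Bspl k0 k j y * (k0 + ((j : ℝ) - 1) * k) = y := by
  obtain ⟨u, rfl⟩ : ∃ u, y = k0 + u * k := ⟨(y - k0) / k, by field_simp; ring⟩
  unfold knot at h1 h2
  push_cast at h1 h2
  have hu1 : 1 ≤ u := by
    by_contra hc; nlinarith
  have hu2 : u ≤ D + 5 := by
    by_contra hc; nlinarith
  obtain ⟨i, hi1, hi2, hs0, hs1⟩ : ∃ i : ℕ, 1 ≤ i ∧ i ≤ D + 4 ∧ (i : ℝ) ≤ u ∧ u ≤ i + 1 := by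
    rcases hu2.lt_or_eq with h | h
    · refine ⟨⌊u⌋₊, Nat.le_floor (by simpa using hu1), ?_, Nat.floor_le (by linarith),
        (Nat.lt_floor_add_one u).le⟩
      have : ⌊u⌋₊ < D + 5 := (Nat.floor_lt (by linarith)).2 (by push_cast; exact h)
      omega
    · exact ⟨D + 4, by omega, le_rfl, by push_cast; linarith, by push_cast; linarith⟩
  have hB : ∀ j : ℕ, Bspl k0 k j (k0 + u * k) = cubicN (u - j + 3) := by
    intro j
    unfold Bspl knot
    congr 1
    push_cast
    field_simp
    ring
  simp only [hB]
  have hsub : Finset.Icc i (i + 3) ⊆ Finset.Icc 1 (D + 7) := by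
    intro j hj
    simp only [Finset.mem_Icc] at *
    omega
  rw [← Finset.sum_subset hsub]
  · have hI : Finset.Icc i (i + 3) = {i, i + 1, i + 2, i + 3} := by
      ext j; simp only [Finset.mem_Icc, Finset.mem_insert, Finset.mem_singleton]; omega
    rw [hI, Finset.sum_insert (by simp), Finset.sum_insert (by simp),
      Finset.sum_insert (by simp), Finset.sum_singleton]
    obtain ⟨s, rfl⟩ : ∃ s, u = i + s := ⟨u - i, by ring⟩
    have a0 : 0 ≤ s := by linarith
    have a1 : s ≤ 1 := by linarith
    push_cast
    rw [show (i : ℝ) + s - i + 3 = s + 3 by ring, show (i : ℝ) + s - (i + 1) + 3 = s + 2 by ring,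
      show (i : ℝ) + s - (i + 2) + 3 = s + 1 by ring, show (i : ℝ) + s - (i + 3) + 3 = s by ring,
      cubicN_p0 s a0 a1, cubicN_p1 s a0 a1, cubicN_p2 s a0 a1, cubicN_p3 s a0 a1]
    ring
  · intro j _ hj
    simp only [Finset.mem_Icc, not_and_or, not_le] at hj
    rw [cubicN_zero, zero_mul]
    rcases hj with hj | hj
    · right
      have : (j : ℝ) + 1 ≤ i := by exact_mod_cast hj
      linarith
    · left
      have : (i : ℝ) + 4 ≤ j := by exact_mod_cast hj
      linarith

/-- coefficient -/
def coefH (D : ℕ) (k0 k : ℝ) (β : Fin D → ℝ) (j : ℕ) : ℝ :=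
  gam D k0 k β 1 + ∑ l ∈ Finset.Icc 2 j, Real.exp (gam D k0 k β l)

lemma exp_gam_edge (D : ℕ) (k0 k : ℝ) (hk : 0 < k) (β : Fin D → ℝ) (j : ℕ)
    (h : j = 2 ∨ j = 3 ∨ j = 4 ∨ j = D + 5 ∨ j = D + 6 ∨ j = D + 7) :
    Real.exp (gam D k0 k β j) = k := by
  unfold gam
  rw [if_neg (by omega), if_pos h, Real.exp_log hk]

lemma coefH_one (D : ℕ) (k0 k : ℝ) (β : Fin D → ℝ) : coefH D k0 k β 1 = k0 := by
  simp [coefH, gam]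

lemma coefH_succ (D : ℕ) (k0 k : ℝ) (β : Fin D → ℝ) (j : ℕ) (hj : 1 ≤ j) :
    coefH D k0 k β (j + 1) = coefH D k0 k β j + Real.exp (gam D k0 k β (j + 1)) := by
  unfold coefH
  rw [Finset.sum_Icc_succ_top (by omega)]
  ring

lemma coefH_low (D : ℕ) (k0 k : ℝ) (hk : 0 < k) (β : Fin D → ℝ) (j : ℕ) (h1 : 1 ≤ j)
    (h4 : j ≤ 4) : coefH D k0 k β j = k0 + ((j : ℝ) - 1) * k := by
  induction j, h1 using Nat.le_induction with
  | base => rw [coefH_one]; simp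
  | succ j hj ih =>
    rw [coefH_succ _ _ _ _ _ hj, ih (by omega), exp_gam_edge _ _ _ hk _ _ (by omega)]
    push_cast; ring

lemma mid_sum (D : ℕ) (hD : 1 ≤ D) (k0 k : ℝ) (hk : 0 < k) (β : Fin D → ℝ) :
    ∑ i : Fin D, Real.exp (gam D k0 k β (5 + i)) = D * k := by
  have : Nonempty (Fin D) := ⟨⟨0, hD⟩⟩
  have hS : 0 < ∑ d, Real.exp (β d) :=
    Finset.sum_pos (fun i _ => Real.exp_pos _) Finset.univ_nonempty
  have hDk : 0 < (D : ℝ) * k := by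
    have : (0 : ℝ) < D := by exact_mod_cast hD
    positivity
  have h : ∀ i : Fin D, Real.exp (gam D k0 k β (5 + i)) =
      Real.exp (β i) * ((D * k) / ∑ d, Real.exp (β d)) := by
    intro i
    have hi := i.2
    unfold gam
    rw [if_neg (by omega), if_neg (by omega), dif_pos (by omega), Real.exp_sub,
      Real.exp_log (by positivity)]
    have : (⟨5 + (i : ℕ) - 5, by omega⟩ : Fin D) = i := by ext; simp
    rw [this]
    field_simp
  simp only [h]
  rw [← Finset.sum_mul]
  field_simp

lemma coefH_mid (D : ℕ) (k0 k : ℝ) (β : Fin D → ℝ) (n : ℕ) :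
    coefH D k0 k β (4 + n) = coefH D k0 k β 4 +
      ∑ i ∈ Finset.range n, Real.exp (gam D k0 k β (5 + i)) := by
  induction n with
  | zero => simp
  | succ n ih =>
    rw [← add_assoc, coefH_succ _ _ _ _ _ (by omega), ih, Finset.sum_range_succ,
      show 4 + n + 1 = 5 + n by omega]
    ring

lemma coefH_high (D : ℕ) (hD : 1 ≤ D) (k0 k : ℝ) (hk : 0 < k) (β : Fin D → ℝ) (j : ℕ)
    (h1 : D + 4 ≤ j) (h4 : j ≤ D + 7) : coefH D k0 k β j = k0 + ((j : ℝ) - 1) * k := by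
  induction j, h1 using Nat.le_induction with
  | base =>
    rw [add_comm D 4, coefH_mid, coefH_low D k0 k hk β 4 (by omega) le_rfl,
      Finset.sum_range (fun i => Real.exp (gam D k0 k β (5 + i))), mid_sum D hD k0 k hk β]
    push_cast; ring
  | succ j hj ih =>
    rw [coefH_succ _ _ _ _ _ (by omega), ih (by omega), exp_gam_edge _ _ _ hk _ _ (by omega)]
    push_cast; ring

lemma Hfun_eq (D : ℕ) (hD : 1 ≤ D) (k0 k : ℝ) (hk : 0 < k) (β : Fin D → ℝ) :
    Hfun D k0 k β = fun y => y + ∑ j ∈ Finset.Icc 5 (D + 3),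
      Bspl k0 k j y * (coefH D k0 k β j - (k0 + ((j : ℝ) - 1) * k)) := by
  funext y
  unfold Hfun
  have hsub : Finset.Icc 5 (D + 3) ⊆ Finset.Icc 1 (D + 7) :=
    Finset.Icc_subset_Icc (by omega) (by omega)
  split_ifs with h
  · rw [Finset.sum_subset hsub]
    · nth_rewrite 2 [← greville D k0 k hk y h.1 h.2]
      rw [← Finset.sum_add_distrib]
      refine Finset.sum_congr rfl fun j _ => ?_
      change _ * coefH D k0 k β j = _
      ring
    · intro j hj hj'
      simp only [Finset.mem_Icc] at hj hj'
      have : coefH D k0 k β j = k0 + ((j : ℝ) - 1) * k := by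
        by_cases h4 : j ≤ 4
        · exact coefH_low D k0 k hk β j hj.1 h4
        · exact coefH_high D hD k0 k hk β j (by omega) hj.2
      rw [this]; ring
  · rw [Finset.sum_eq_zero, add_zero]
    intro j hj
    simp only [Finset.mem_Icc] at hj
    have c1 : (5 : ℝ) ≤ j := by exact_mod_cast hj.1
    have c2 : (j : ℝ) ≤ D + 3 := by exact_mod_cast hj.2
    unfold Bspl
    rw [cubicN_zero, zero_mul]
    rw [not_and_or, not_le, not_le] at h
    unfold knot at *
    push_cast at *
    rw [div_le_iff₀ hk, le_div_iff₀ hk]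
    rcases h with h | h
    · left; nlinarith
    · right; nlinarith

/-- For every `β ∈ ℝ^D` and every `x ∈ [k_1, a] ∪ [b, k_m]`
(where `a = k_2`, `b = k_{m−1}`, `m = D + 5`), `H` is differentiable at `x`
with derivative `H′(x) = 1`. -/
theorem H_unit_slope (D : ℕ) (hD : 1 ≤ D) (k0 k : ℝ) (hk : 0 < k) (β : Fin D → ℝ)
    (x : ℝ)
    (hx : x ∈ Set.Icc (knot k0 k 1) (knot k0 k 2) ∪
          Set.Icc (knot k0 k ((D : ℤ) + 4)) (knot k0 k ((D : ℤ) + 5))) :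
    HasDerivAt (Hfun D k0 k β) 1 x := by
  rw [Hfun_eq D hD k0 k hk β]
  have key : HasDerivAt (fun y => ∑ j ∈ Finset.Icc 5 (D + 3),
      Bspl k0 k j y * (coefH D k0 k β j - (k0 + ((j : ℝ) - 1) * k)))
      (∑ j ∈ Finset.Icc 5 (D + 3), (0 : ℝ)) x := by
    refine HasDerivAt.fun_sum fun j hj => ?_
    simp only [Finset.mem_Icc] at hj
    have c1 : (5 : ℝ) ≤ j := by exact_mod_cast hj.1
    have c2 : (j : ℝ) ≤ D + 3 := by exact_mod_cast hj.2
    have hd : HasDerivAt cubicN 0 ((x - knot k0 k ((j : ℤ) - 3)) / k) := by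
      apply cubicN_deriv
      simp only [Set.mem_union, Set.mem_Icc] at hx
      unfold knot at *
      push_cast at *
      rw [div_le_iff₀ hk, le_div_iff₀ hk]
      rcases hx with h | h
      · left; nlinarith
      · right; nlinarith
    have hl : HasDerivAt (fun y : ℝ => (y - knot k0 k ((j : ℤ) - 3)) / k) (1 / k) x :=
      ((hasDerivAt_id x).sub_const _).div_const k
    have hc := (hd.comp x hl).mul_const (coefH D k0 k β j - (k0 + ((j : ℝ) - 1) * k))
    rw [zero_mul, zero_mul] at hc
    exact hc
  have hf := (hasDerivAt_id x).add key
  rw [Finset.sum_const_zero, add_zero] at hf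
  exact hf

end
end

section
/- For every unconstrained coefficient vector β ∈ ℝ^D, the transformation H satisfies H(a) = a and H(b) = b. -/
open MeasureTheory Finset

noncomputable section

lemma cubicN_int (n : ℤ) : cubicN (n : ℝ) =
    if n = 1 then 1/6 else if n = 2 then 4/6 else if n = 3 then 1/6 else 0 := by
  by_cases h1 : n = 1
  · subst h1; norm_num [cubicN]
  by_cases h2 : n = 2
  · subst h2; norm_num [cubicN]
  by_cases h3 : n = 3
  · subst h3; norm_num [cubicN]
  by_cases h0 : n = 0
  · subst h0; norm_num [cubicN]
  by_cases h4 : n = 4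
  · subst h4; norm_num [cubicN]
  have : n < 0 ∨ 4 < n := by omega
  simp only [h1, h2, h3, if_false]
  unfold cubicN
  rcases this with h | h
  · have h' : (n : ℝ) < 0 := by exact_mod_cast h
    rw [if_neg, if_neg, if_neg, if_neg] <;> rintro ⟨_, _⟩ <;> linarith
  · have h' : (4 : ℝ) < n := by exact_mod_cast h
    rw [if_neg, if_neg, if_neg, if_neg] <;> rintro ⟨_, _⟩ <;> linarith

lemma Bspl_knot (k0 k : ℝ) (hk : 0 < k) (i j : ℕ) :
    Bspl k0 k j (knot k0 k (i : ℤ)) =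
      (if j = i then 1/6 else 0) + (if j = i + 1 then 4/6 else 0)
        + (if j = i + 2 then 1/6 else 0) := by
  have : (knot k0 k (i : ℤ) - knot k0 k ((j : ℤ) - 3)) / k = (((i : ℤ) - j + 3 : ℤ) : ℝ) := by
    unfold knot
    push_cast
    field_simp
    ring
  rw [Bspl, this, cubicN_int]
  split_ifs <;> first | omega | norm_num

lemma sum_knot (k0 k : ℝ) (hk : 0 < k) (i J : ℕ) (h1 : 1 ≤ i) (h2 : i + 2 ≤ J) (c : ℕ → ℝ) :
    ∑ j ∈ Finset.Icc 1 J, Bspl k0 k j (knot k0 k (i : ℤ)) * c j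
      = (c i + 4 * c (i + 1) + c (i + 2)) / 6 := by
  simp only [Bspl_knot k0 k hk, add_mul, ite_mul, zero_mul, Finset.sum_add_distrib,
    Finset.sum_ite_eq', Finset.mem_Icc]
  rw [if_pos (by omega), if_pos (by omega), if_pos (by omega)]
  ring

lemma sum_mid (D : ℕ) (hD : 1 ≤ D) (k0 k : ℝ) (hk : 0 < k) (β : Fin D → ℝ) :
    ∑ l ∈ Finset.Ico 5 (D + 5), Real.exp (gam D k0 k β l) = D * k := by
  have hD' : (0 : ℝ) < D := by exact_mod_cast hD
  have : Nonempty (Fin D) := ⟨⟨0, hD⟩⟩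
  have hS : 0 < ∑ d, Real.exp (β d) :=
    Finset.sum_pos (fun _ _ => Real.exp_pos _) Finset.univ_nonempty
  rw [Finset.sum_Ico_eq_sum_range, show D + 5 - 5 = D by omega, Finset.sum_range]
  have : ∀ d : Fin D, Real.exp (gam D k0 k β (5 + d)) =
      Real.exp (β d) / ((∑ d, Real.exp (β d)) / ((D : ℝ) * k)) := by
    intro d
    have hd := d.2
    rw [gam, if_neg (by omega), if_neg (by omega), dif_pos (by omega), Real.exp_sub,
      Real.exp_log (by positivity)]
    congr 4
    omega
  rw [Finset.sum_congr rfl (fun d _ => this d), ← Finset.sum_div]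
  field_simp

/-- For every `β ∈ ℝ^D`, the transformation `H` satisfies `H(a) = a` and
`H(b) = b`, where `a = k_2` and `b = k_{m−1}` with `m = D + 5`. -/
theorem H_passes_through_a_and_b (D : ℕ) (hD : 1 ≤ D) (k0 k : ℝ) (hk : 0 < k)
    (β : Fin D → ℝ) :
    Hfun D k0 k β (knot k0 k 2) = knot k0 k 2 ∧
    Hfun D k0 k β (knot k0 k ((D : ℤ) + 4)) = knot k0 k ((D : ℤ) + 4) := by
  have g1 : gam D k0 k β 1 = k0 := by simp [gam]
  have E := exp_gam_edge D k0 k hk β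
  have s2 : ∑ l ∈ Finset.Icc 2 2, Real.exp (gam D k0 k β l) = k := by
    rw [Finset.Icc_self, Finset.sum_singleton, E 2 (by omega)]
  have s3 : ∑ l ∈ Finset.Icc 2 3, Real.exp (gam D k0 k β l) = 2 * k := by
    rw [Finset.sum_Icc_succ_top (by omega), s2, E _ (by omega)]; ring
  have s4 : ∑ l ∈ Finset.Icc 2 4, Real.exp (gam D k0 k β l) = 3 * k := by
    rw [Finset.sum_Icc_succ_top (by omega), s3, E _ (by omega)]; ring
  have t4 : ∑ l ∈ Finset.Icc 2 (D + 4), Real.exp (gam D k0 k β l) = (D + 3) * k := by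
    have e1 : Finset.Icc 2 (D + 4) = Finset.Ico 2 (D + 5) := by
      ext; simp only [Finset.mem_Icc, Finset.mem_Ico]; omega
    have e2 : Finset.Icc 2 4 = Finset.Ico 2 5 := by
      ext; simp only [Finset.mem_Icc, Finset.mem_Ico]; omega
    rw [e1, ← Finset.sum_Ico_consecutive _ (show 2 ≤ 5 by omega) (show 5 ≤ D + 5 by omega),
      ← e2, s4, sum_mid D hD k0 k hk β]
    ring
  have t5 : ∑ l ∈ Finset.Icc 2 (D + 4 + 1), Real.exp (gam D k0 k β l) = (D + 4) * k := by
    rw [Finset.sum_Icc_succ_top (by omega), t4, E _ (by omega)]; ring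
  have t6 : ∑ l ∈ Finset.Icc 2 (D + 4 + 2), Real.exp (gam D k0 k β l) = (D + 5) * k := by
    rw [show D + 4 + 2 = (D + 4 + 1) + 1 by ring, Finset.sum_Icc_succ_top (by omega), t5,
      E _ (by omega)]; ring
  have hDk : (0 : ℝ) ≤ D * k := by positivity
  constructor
  · rw [Hfun, if_pos (by unfold knot; push_cast; constructor <;> nlinarith)]
    have := sum_knot k0 k hk 2 (D + 7) (by omega) (by omega)
      (fun j => gam D k0 k β 1 + ∑ l ∈ Finset.Icc 2 j, Real.exp (gam D k0 k β l))
    simp only [Nat.reduceAdd, s2, s3, s4, g1, Nat.cast_ofNat] at this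
    simp only [g1]
    rw [this, knot]; push_cast; ring
  · rw [Hfun, if_pos (by unfold knot; push_cast; constructor <;> nlinarith)]
    have := sum_knot k0 k hk (D + 4) (D + 7) (by omega) (by omega)
      (fun j => gam D k0 k β 1 + ∑ l ∈ Finset.Icc 2 j, Real.exp (gam D k0 k β l))
    simp only [t4, t5, t6, g1] at this
    push_cast at this
    simp only [g1]
    rw [this, knot]; push_cast; ring

end
end

section
/- (Tail probabilities.) Let β ∈ ℝ^D be arbitrary. Let F : ℝ → ℝ be a continuous, strictly increasing function with range (0,1) (a continuous cumulative distribution function), and let G : ℝ → ℝ be the function satisfying Φ(G(t)) = F(t) for all t ∈ ℝ. Let q_a and q_b be the unique reals with F(q_a) = Φ(a) and F(q_b) = Φ(b). If y is a real-valued random variable such that the distribution of (H ∘ G)(y) is the standard normal distribution N(0,1), then ℙ(y ≤ t) = F(t) for every t ∈ (−∞, q_a] ∪ [q_b, ∞). -/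
open MeasureTheory Finset

noncomputable section

/-- The standard normal CDF `Φ`. -/
def stdNormalCDF (t : ℝ) : ℝ := ((ProbabilityTheory.gaussianReal 0 1) (Set.Iic t)).toReal


lemma wpos (u : ℝ) (h0 : 0 ≤ u) (h1 : u ≤ 1) :
    0 ≤ (1-u)^3/6 ∧ 0 ≤ (3*u^3-6*u^2+4)/6 ∧ 0 ≤ (-3*u^3+3*u^2+3*u+1)/6 ∧ 0 ≤ u^3/6 := by
  have h2 : 0 ≤ 1 - u := by linarith
  refine ⟨by positivity, ?_, ?_, by positivity⟩
  · nlinarith [mul_nonneg h0 (mul_nonneg h2 h2), mul_nonneg h0 h2, pow_nonneg h2 3, pow_nonneg h0 3]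
  · nlinarith [mul_nonneg h0 (mul_nonneg h2 h2), mul_nonneg h0 h2, pow_nonneg h2 3, pow_nonneg h0 3, mul_nonneg h0 (mul_nonneg h0 h2)]

lemma N0 (u : ℝ) (h0 : 0 ≤ u) (h1 : u ≤ 1) : cubicN (u+3) = (1-u)^3/6 := by
  unfold cubicN
  rw [if_neg (by rintro ⟨_, _⟩; linarith), if_neg (by rintro ⟨_, _⟩; linarith),
    if_neg (by rintro ⟨_, _⟩; linarith), if_pos ⟨by linarith, by linarith⟩]
  ring

lemma N1 (u : ℝ) (h0 : 0 ≤ u) (h1 : u ≤ 1) : cubicN (u+2) = (3*u^3-6*u^2+4)/6 := by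
  rcases h1.lt_or_eq with h | rfl
  · unfold cubicN
    rw [if_neg (by rintro ⟨_, _⟩; linarith), if_neg (by rintro ⟨_, _⟩; linarith),
      if_pos ⟨by linarith, by linarith⟩]
    ring
  · norm_num [cubicN]

lemma N2 (u : ℝ) (h0 : 0 ≤ u) (h1 : u ≤ 1) : cubicN (u+1) = (-3*u^3+3*u^2+3*u+1)/6 := by
  rcases h1.lt_or_eq with h | rfl
  · unfold cubicN
    rw [if_neg (by rintro ⟨_, _⟩; linarith), if_pos ⟨by linarith, by linarith⟩]
    ring
  · norm_num [cubicN]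

lemma N3 (u : ℝ) (h0 : 0 ≤ u) (h1 : u ≤ 1) : cubicN u = u^3/6 := by
  rcases h1.lt_or_eq with h | rfl
  · unfold cubicN
    rw [if_pos ⟨by linarith, by linarith⟩]
  · norm_num [cubicN]

lemma Nleft (t : ℝ) (h : t ≤ 0) : cubicN t = 0 := by
  rcases h.lt_or_eq with h | rfl
  · unfold cubicN
    rw [if_neg (by rintro ⟨_, _⟩; linarith), if_neg (by rintro ⟨_, _⟩; linarith),
      if_neg (by rintro ⟨_, _⟩; linarith), if_neg (by rintro ⟨_, _⟩; linarith)]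
  · norm_num [cubicN]

lemma Nright (t : ℝ) (h : 4 ≤ t) : cubicN t = 0 := by
  rcases h.lt_or_eq with h | rfl
  · unfold cubicN
    rw [if_neg (by rintro ⟨_, _⟩; linarith), if_neg (by rintro ⟨_, _⟩; linarith),
      if_neg (by rintro ⟨_, _⟩; linarith), if_neg (by rintro ⟨_, _⟩; linarith)]
  · norm_num [cubicN]

lemma Bval (k0 k u : ℝ) (hk : 0 < k) (i j : ℕ) :
    Bspl k0 k j (k0 + (i + u) * k) = cubicN (u + i - j + 3) := by
  unfold Bspl knot
  congr 1
  push_cast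
  field_simp
  ring

lemma splineLocal (D : ℕ) (k0 k u : ℝ) (hk : 0 < k) (h0 : 0 ≤ u) (h1 : u ≤ 1) (i : ℕ)
    (hi : 1 ≤ i) (hi' : i ≤ D + 4) (c : ℕ → ℝ) :
    ∑ j ∈ Finset.Icc 1 (D + 7), Bspl k0 k j (k0 + (i + u) * k) * c j
    = (1-u)^3/6 * c i + (3*u^3-6*u^2+4)/6 * c (i+1) + (-3*u^3+3*u^2+3*u+1)/6 * c (i+2)
      + u^3/6 * c (i+3) := by
  have hs : ({i, i+1, i+2, i+3} : Finset ℕ) ⊆ Finset.Icc 1 (D+7) := by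
    intro j hj
    simp only [Finset.mem_insert, Finset.mem_singleton] at hj
    rw [Finset.mem_Icc]; omega
  rw [← Finset.sum_subset hs]
  · rw [Finset.sum_insert (by simp), Finset.sum_insert (by simp), Finset.sum_insert (by simp),
      Finset.sum_singleton]
    simp only [Bval k0 k u hk]
    push_cast
    rw [← N0 u h0 h1, ← N1 u h0 h1, ← N2 u h0 h1, ← N3 u h0 h1]
    ring_nf
  · intro j _ hj
    simp only [Finset.mem_insert, Finset.mem_singleton] at hj
    rw [Bval k0 k u hk]
    rcases lt_or_ge j i with h | h
    · have : (j:ℝ) + 1 ≤ i := by exact_mod_cast h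
      rw [Nright _ (by linarith), zero_mul]
    · have h4 : i + 4 ≤ j := by omega
      have : (i:ℝ) + 4 ≤ j := by exact_mod_cast h4
      rw [Nleft _ (by linarith), zero_mul]

/-- coefficients -/
def cf (D : ℕ) (k0 k : ℝ) (β : Fin D → ℝ) (j : ℕ) : ℝ :=
  gam D k0 k β 1 + ∑ l ∈ Finset.Icc 2 j, Real.exp (gam D k0 k β l)

lemma cf_succ (D : ℕ) (k0 k : ℝ) (β : Fin D → ℝ) (j : ℕ) (hj : 1 ≤ j) :
    cf D k0 k β (j+1) = cf D k0 k β j + Real.exp (gam D k0 k β (j+1)) := by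
  unfold cf
  rw [Finset.sum_Icc_succ_top (by omega)]; ring

lemma cf_mono (D : ℕ) (k0 k : ℝ) (β : Fin D → ℝ) (i j : ℕ) (hij : i ≤ j) :
    cf D k0 k β i ≤ cf D k0 k β j := by
  unfold cf
  gcongr

lemma cf_lo (D : ℕ) (k0 k : ℝ) (hk : 0 < k) (β : Fin D → ℝ) :
    cf D k0 k β 1 = k0 ∧ cf D k0 k β 2 = k0 + k ∧ cf D k0 k β 3 = k0 + 2*k ∧
    cf D k0 k β 4 = k0 + 3*k := by
  have e1 : cf D k0 k β 1 = k0 := by simp [cf, gam]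
  have e2 : cf D k0 k β 2 = k0 + k := by
    rw [cf_succ _ _ _ _ 1 (by norm_num), e1]; simp [gam, Real.exp_log hk]
  have e3 : cf D k0 k β 3 = k0 + 2*k := by
    rw [cf_succ _ _ _ _ 2 (by norm_num), e2]; simp [gam, Real.exp_log hk]; ring
  have e4 : cf D k0 k β 4 = k0 + 3*k := by
    rw [cf_succ _ _ _ _ 3 (by norm_num), e3]; simp [gam, Real.exp_log hk]; ring
  exact ⟨e1, e2, e3, e4⟩

lemma cf_hi4 (D : ℕ) (hD : 1 ≤ D) (k0 k : ℝ) (hk : 0 < k) (β : Fin D → ℝ) :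
    cf D k0 k β (D+4) = k0 + (D + 3)*k := by
  have hstep : ∀ n (hn : n ≤ D), cf D k0 k β (n+4) = k0 + 3*k +
      ∑ l ∈ Finset.range n, Real.exp (gam D k0 k β (l+5)) := by
    intro n
    induction n with
    | zero => intro _; simp [(cf_lo D k0 k hk β).2.2.2]
    | succ n ih =>
      intro hn
      rw [show n+1+4 = (n+4)+1 by ring, cf_succ _ _ _ _ _ (by omega), ih (by omega),
        Finset.sum_range_succ]
      ring
  have hDp : (0:ℝ) < D := by exact_mod_cast hD
  have : Nonempty (Fin D) := ⟨⟨0, hD⟩⟩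
  have hS : 0 < ∑ d, Real.exp (β d) := Finset.sum_pos (fun _ _ => Real.exp_pos _) Finset.univ_nonempty
  rw [hstep D le_rfl, ← Fin.sum_univ_eq_sum_range (fun l => Real.exp (gam D k0 k β (l+5)))]
  have : ∀ d : Fin D, Real.exp (gam D k0 k β ((d:ℕ)+5)) =
      Real.exp (β d) * ((D * k) / ∑ d, Real.exp (β d)) := by
    intro d
    have hd := d.2
    unfold gam
    rw [if_neg (by omega), if_neg (by omega), dif_pos ⟨by omega, by omega⟩, Real.exp_sub,
      Real.exp_log (by positivity)]
    simp only [Nat.add_sub_cancel, Fin.eta]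
    field_simp
  rw [Finset.sum_congr rfl (fun d _ => this d), ← Finset.sum_mul]
  field_simp
  ring

lemma cf_hi (D : ℕ) (hD : 1 ≤ D) (k0 k : ℝ) (hk : 0 < k) (β : Fin D → ℝ) :
    cf D k0 k β (D+5) = k0 + (D + 4)*k ∧ cf D k0 k β (D+6) = k0 + (D + 5)*k ∧
    cf D k0 k β (D+7) = k0 + (D + 6)*k := by
  have e4 := cf_hi4 D hD k0 k hk β
  have e5 : cf D k0 k β (D+5) = k0 + (D + 4)*k := by
    rw [cf_succ _ _ _ _ (D+4) (by omega), e4]; simp [gam, Real.exp_log hk]; ring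
  have e6 : cf D k0 k β (D+6) = k0 + (D + 5)*k := by
    rw [cf_succ _ _ _ _ (D+5) (by omega), e5]; simp [gam, Real.exp_log hk]; ring
  have e7 : cf D k0 k β (D+7) = k0 + (D + 6)*k := by
    rw [cf_succ _ _ _ _ (D+6) (by omega), e6]; simp [gam, Real.exp_log hk]; ring
  exact ⟨e5, e6, e7⟩

lemma H_local (D : ℕ) (k0 k u : ℝ) (hk : 0 < k) (h0 : 0 ≤ u) (h1 : u ≤ 1) (i : ℕ)
    (hi : 1 ≤ i) (hi' : i ≤ D + 4) (β : Fin D → ℝ) :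
    Hfun D k0 k β (k0 + (i + u) * k) = (1-u)^3/6 * cf D k0 k β i
      + (3*u^3-6*u^2+4)/6 * cf D k0 k β (i+1) + (-3*u^3+3*u^2+3*u+1)/6 * cf D k0 k β (i+2)
      + u^3/6 * cf D k0 k β (i+3) := by
  have a1 : (1:ℝ) ≤ i := by exact_mod_cast hi
  have a2 : (i:ℝ) ≤ D + 4 := by exact_mod_cast hi'
  unfold Hfun knot
  rw [if_pos]
  · exact splineLocal D k0 k u hk h0 h1 i hi hi' (cf D k0 k β)
  · push_cast
    constructor
    · have : 1 * k ≤ (i+u) * k := by gcongr; linarith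
      linarith
    · have : (i+u) * k ≤ (D + 5) * k := by apply mul_le_mul_of_nonneg_right _ hk.le; linarith
      linarith

lemma exists_local (D : ℕ) (k0 k x : ℝ) (hk : 0 < k) (h1 : k0 + k ≤ x) (h2 : x ≤ k0 + (D+5)*k) :
    ∃ i : ℕ, ∃ u : ℝ, 0 ≤ u ∧ u ≤ 1 ∧ 1 ≤ i ∧ i ≤ D + 4 ∧ x = k0 + (i + u) * k := by
  set z := (x - k0) / k with hz
  have hx : x = k0 + z * k := by rw [hz]; field_simp; ring
  have z1 : 1 ≤ z := by rw [hz, le_div_iff₀ hk]; linarith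
  have z2 : z ≤ D + 5 := by rw [hz, div_le_iff₀ hk]; linarith
  rcases z2.lt_or_eq with h | h
  · refine ⟨⌊z⌋₊, z - ⌊z⌋₊, ?_, ?_, ?_, ?_, ?_⟩
    · linarith [Nat.floor_le (show 0 ≤ z by linarith)]
    · linarith [Nat.lt_floor_add_one z]
    · exact Nat.le_floor (by simpa using z1)
    · have : ⌊z⌋₊ < D + 5 := (Nat.floor_lt (by linarith)).2 (by exact_mod_cast h)
      omega
    · rw [hx]; ring
  · refine ⟨D+4, 1, by norm_num, le_rfl, by omega, le_rfl, ?_⟩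
    rw [hx, h]; push_cast; ring

lemma H_left (D : ℕ) (hD : 1 ≤ D) (k0 k x : ℝ) (hk : 0 < k) (β : Fin D → ℝ)
    (h : x ≤ k0 + 2 * k) : Hfun D k0 k β x = x := by
  rcases lt_or_ge x (k0 + k) with h1 | h1
  · unfold Hfun knot
    rw [if_neg]
    rintro ⟨h2, _⟩
    push_cast at h2; linarith
  · obtain ⟨e1, e2, e3, e4⟩ := cf_lo D k0 k hk β
    have hx : x = k0 + ((1:ℕ) + ((x - k0)/k - 1)) * k := by field_simp; push_cast; ring
    rw [hx]
    have b1 : 1 ≤ (x-k0)/k := by rw [le_div_iff₀ hk]; linarith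
    have b2 : (x-k0)/k ≤ 2 := by rw [div_le_iff₀ hk]; linarith
    rw [H_local D k0 k _ hk (by linarith) (by linarith) 1 le_rfl (by omega), e1, e2, e3, e4]
    push_cast
    ring

lemma H_right (D : ℕ) (hD : 1 ≤ D) (k0 k x : ℝ) (hk : 0 < k) (β : Fin D → ℝ)
    (h : k0 + (D+4) * k ≤ x) : Hfun D k0 k β x = x := by
  rcases lt_or_ge (k0 + (D+5)*k) x with h1 | h1
  · unfold Hfun knot
    rw [if_neg]
    rintro ⟨_, h2⟩
    push_cast at h2; linarith
  · have e4 := cf_hi4 D hD k0 k hk β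
    obtain ⟨e5, e6, e7⟩ := cf_hi D hD k0 k hk β
    have hx : x = k0 + ((D+4:ℕ) + ((x - k0)/k - (D+4))) * k := by field_simp; push_cast; ring
    rw [hx]
    have b1 : D+4 ≤ (x-k0)/k := by rw [le_div_iff₀ hk]; linarith
    have b2 : (x-k0)/k ≤ D+5 := by rw [div_le_iff₀ hk]; linarith
    rw [H_local D k0 k _ hk (by linarith) (by linarith) (D+4) (by omega) (by omega), e4,
      e5, e6, e7]
    push_cast
    ring

lemma H_ge (D : ℕ) (hD : 1 ≤ D) (k0 k x : ℝ) (hk : 0 < k) (β : Fin D → ℝ)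
    (h : k0 + 2 * k ≤ x) : k0 + 2 * k ≤ Hfun D k0 k β x := by
  rcases le_or_gt (k0 + (D+4) * k) x with h1 | h1
  · rw [H_right D hD k0 k x hk β h1]; exact h
  have hlo : k0 + k ≤ x := by linarith
  have hup : x ≤ k0 + (D+5) * k := by linarith
  clear h1
  obtain ⟨i, u, h0, h1, hi, hi', rfl⟩ := exists_local D k0 k x hk hlo hup
  obtain ⟨e1, e2, e3, e4⟩ := cf_lo D k0 k hk β
  rcases Nat.lt_or_ge i 2 with h2 | h2
  · obtain rfl : i = 1 := by omega
    have : k0 + ((1:ℕ) + u) * k ≤ k0 + 2 * k := by push_cast; nlinarith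
    rw [H_left D hD k0 k _ hk β this]; exact h
  rw [H_local D k0 k u hk h0 h1 i hi hi']
  obtain ⟨w0, w1, w2, w3⟩ := wpos u h0 h1
  have c0 := mul_le_mul_of_nonneg_left (cf_mono D k0 k β 2 i h2) w0
  have c1 := mul_le_mul_of_nonneg_left (cf_mono D k0 k β 3 (i+1) (by omega)) w1
  have c2 := mul_le_mul_of_nonneg_left (cf_mono D k0 k β 4 (i+2) (by omega)) w2
  have c3 := mul_le_mul_of_nonneg_left (cf_mono D k0 k β 4 (i+3) (by omega)) w3
  rw [e2] at c0
  rw [e3] at c1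
  rw [e4] at c2 c3
  have hw : 0 ≤ k * ((-3*u^3+3*u^2+3*u+1)/6 + u^3/6 - (1-u)^3/6) := by
    apply mul_nonneg hk.le
    nlinarith [mul_nonneg h0 (sub_nonneg.2 h1), pow_nonneg h0 3,
      mul_nonneg h0 (mul_nonneg h0 (sub_nonneg.2 h1))]
  linarith

lemma H_le (D : ℕ) (hD : 1 ≤ D) (k0 k x : ℝ) (hk : 0 < k) (β : Fin D → ℝ)
    (h : x ≤ k0 + (D+4) * k) : Hfun D k0 k β x ≤ k0 + (D+4) * k := by
  rcases le_or_gt x (k0 + 2 * k) with h1 | h1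
  · rw [H_left D hD k0 k x hk β h1]; exact h
  have hlo : k0 + k ≤ x := by linarith
  have hup : x ≤ k0 + (D+5) * k := by linarith
  clear h1
  obtain ⟨i, u, h0, h1, hi, hi', rfl⟩ := exists_local D k0 k x hk hlo hup
  have e4 := cf_hi4 D hD k0 k hk β
  obtain ⟨e5, e6, e7⟩ := cf_hi D hD k0 k hk β
  rcases Nat.lt_or_ge (D+3) i with h2 | h2
  · obtain rfl : i = D+4 := by omega
    have : k0 + (D+4) * k ≤ k0 + ((D+4:ℕ) + u) * k := by push_cast; nlinarith
    rw [H_right D hD k0 k _ hk β this]; exact h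
  rw [H_local D k0 k u hk h0 h1 i hi hi']
  obtain ⟨w0, w1, w2, w3⟩ := wpos u h0 h1
  have c0 := mul_le_mul_of_nonneg_left (cf_mono D k0 k β i (D+4) (by omega)) w0
  have c1 := mul_le_mul_of_nonneg_left (cf_mono D k0 k β (i+1) (D+4) (by omega)) w1
  have c2 := mul_le_mul_of_nonneg_left (cf_mono D k0 k β (i+2) (D+5) (by omega)) w2
  have c3 := mul_le_mul_of_nonneg_left (cf_mono D k0 k β (i+3) (D+6) (by omega)) w3
  rw [e4] at c0 c1
  rw [e5] at c2
  rw [e6] at c3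
  have hw : 0 ≤ k * ((3*u^3-6*u^2+4)/6 + (1-u)^3/6 - u^3/6) := by
    apply mul_nonneg hk.le
    nlinarith [mul_nonneg h0 (sub_nonneg.2 h1), pow_nonneg (sub_nonneg.2 h1) 3,
      mul_nonneg h0 (mul_nonneg h0 (sub_nonneg.2 h1))]
  linarith

lemma Phi_strictMono : StrictMono stdNormalCDF := by
  intro s t hst
  unfold stdNormalCDF
  rw [ENNReal.toReal_lt_toReal (measure_ne_top _ _) (measure_ne_top _ _)]
  rw [← Set.Iic_union_Ioc_eq_Iic hst.le, measure_union (Set.Iic_disjoint_Ioc le_rfl) measurableSet_Ioc]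
  apply ENNReal.lt_add_right (measure_ne_top _ _)
  intro h0
  have := ProbabilityTheory.gaussianReal_absolutelyContinuous' 0 (v := 1) one_ne_zero h0
  rw [Real.volume_Ioc, ENNReal.ofReal_eq_zero] at this
  linarith

/-- Tail probabilities: Let `β ∈ ℝ^D` be arbitrary. Let `F : ℝ → ℝ` be a
continuous, strictly increasing function with range `(0,1)`, and let `G : ℝ → ℝ` satisfy
`Φ(G(t)) = F(t)` for all `t`. Let `q_a` and `q_b` be the unique reals with
`F(q_a) = Φ(a)` and `F(q_b) = Φ(b)` (where `a = k_2`, `b = k_{m−1}`). If `y` is a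
real-valued random variable such that the distribution of `(H ∘ G)(y)` is `N(0,1)`,
then `ℙ(y ≤ t) = F(t)` for every `t ∈ (−∞, q_a] ∪ [q_b, ∞)`. -/
theorem tail_probabilities (D : ℕ) (hD : 1 ≤ D) (k0 k : ℝ) (hk : 0 < k)
    (β : Fin D → ℝ)
    (F G : ℝ → ℝ) (hFcont : Continuous F) (hFmono : StrictMono F)
    (hFrange : Set.range F = Set.Ioo 0 1)
    (hG : ∀ t, stdNormalCDF (G t) = F t)
    (qa qb : ℝ) (hqa : F qa = stdNormalCDF (knot k0 k 2))
    (hqb : F qb = stdNormalCDF (knot k0 k ((D : ℤ) + 4)))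
    {Ω : Type*} [MeasurableSpace Ω] (P : MeasureTheory.Measure Ω)
    [MeasureTheory.IsProbabilityMeasure P]
    (y : Ω → ℝ) (hy : Measurable y)
    (hdist : MeasureTheory.Measure.map (fun ω => Hfun D k0 k β (G (y ω))) P
      = ProbabilityTheory.gaussianReal 0 1) :
    ∀ t : ℝ, (t ≤ qa ∨ qb ≤ t) → (P {ω | y ω ≤ t}).toReal = F t := by
  have hGm : StrictMono G := fun s t hst => by
    rw [← Phi_strictMono.lt_iff_lt, hG, hG]; exact hFmono hst
  have hGa : G qa = k0 + 2 * k := by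
    have := Phi_strictMono.injective ((hG qa).trans hqa)
    rw [this]; simp [knot]
  have hGb : G qb = k0 + (D + 4) * k := by
    have := Phi_strictMono.injective ((hG qb).trans hqb)
    rw [this]; simp [knot]
  have hae : AEMeasurable (fun ω => Hfun D k0 k β (G (y ω))) P := by
    by_contra hc
    rw [Measure.map_of_not_aemeasurable hc] at hdist
    have := measure_univ (μ := ProbabilityTheory.gaussianReal 0 1)
    rw [← hdist] at this
    simp at this
  have : NullSingletonClass (ProbabilityTheory.gaussianReal 0 1) :=
    ProbabilityTheory.nullSingletonClass_gaussianReal one_ne_zero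
  intro t ht
  rw [← hG t]
  unfold stdNormalCDF
  congr 1
  have hle : P {ω | Hfun D k0 k β (G (y ω)) ≤ G t}
      = ProbabilityTheory.gaussianReal 0 1 (Set.Iic (G t)) := by
    rw [← hdist, Measure.map_apply_of_aemeasurable hae measurableSet_Iic]; rfl
  have hlt : P {ω | Hfun D k0 k β (G (y ω)) < G t}
      = ProbabilityTheory.gaussianReal 0 1 (Set.Iic (G t)) := by
    rw [← measure_congr (Iio_ae_eq_Iic (μ := ProbabilityTheory.gaussianReal 0 1) (a := G t)),
      ← hdist, Measure.map_apply_of_aemeasurable hae measurableSet_Iio]; rfl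
  apply le_antisymm
  · rw [← hle]
    apply measure_mono
    intro ω hω
    have hω' : G (y ω) ≤ G t := hGm.monotone hω
    show Hfun D k0 k β (G (y ω)) ≤ G t
    rcases ht with h | h
    · have := hGm.monotone h
      rw [H_left D hD k0 k _ hk β (by linarith)]; exact hω'
    · have := hGm.monotone h
      rcases le_or_gt (G (y ω)) (k0 + (D+4) * k) with h3 | h3
      · linarith [H_le D hD k0 k _ hk β h3]
      · rw [H_right D hD k0 k _ hk β h3.le]; exact hω'
  · rw [← hlt]
    apply measure_mono
    intro ω hω
    have hω' : Hfun D k0 k β (G (y ω)) < G t := hω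
    show y ω ≤ t
    by_contra hc
    have hc' : G t < G (y ω) := hGm (not_le.1 hc)
    rcases ht with h | h
    · have := hGm.monotone h
      rcases le_or_gt (k0 + 2 * k) (G (y ω)) with h3 | h3
      · linarith [H_ge D hD k0 k _ hk β h3]
      · rw [H_left D hD k0 k _ hk β h3.le] at hω'; linarith
    · have := hGm.monotone h
      rw [H_right D hD k0 k _ hk β (by linarith)] at hω'; linarith


end
end

section
/- (Density factorization of the triangular transport model.) Suppose each f_i : ℝ^{i−1} → ℝ is Borel measurable and each d_i > 0. Let μ be the Borel measure on ℝ^L whose density with respect to L-dimensional Lebesgue measure is p(y) = ∏_{i=1}^L φ((y_i − f_i(y_1, …, y_{i−1}))/d_i)/d_i, where φ is the standard normal probability density function. Then the pushforward of μ under the lower-triangular transport map T equals the L-dimensional standard Gaussian measure (the product of L copies of N(0,1)); equivalently, if Z is distributed as the L-dimensional standard Gaussian, then T⁻¹(Z) has Lebesgue density p. -/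
open MeasureTheory

noncomputable section

/-- The lower-triangular transport map `T : ℝ^L → ℝ^L` with components
`T(z)_i = (z_i − f_i(z_1, …, z_{i−1}))/d_i`. -/
def Tmap (L : ℕ) (f : (i : Fin L) → (Fin i → ℝ) → ℝ) (d : Fin L → ℝ) :
    (Fin L → ℝ) → (Fin L → ℝ) :=
  fun z i => (z i - f i (fun j => z ⟨j.1, lt_trans j.2 i.2⟩)) / d i

/-- The standard normal probability density function `φ`. -/
def stdNormalPDF (x : ℝ) : ℝ := (Real.sqrt (2 * Real.pi))⁻¹ * Real.exp (-x ^ 2 / 2)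

lemma aux_one (g : ℝ → ENNReal) (hg : Measurable g) (c d : ℝ) (hd : 0 < d) :
    ∫⁻ x, g ((x - c) / d) * ENNReal.ofReal (1 / d) = ∫⁻ x, g x := by
  rw [lintegral_mul_const _ (by fun_prop)]
  rw [lintegral_sub_right_eq_self (fun x => g (x / d)) c]
  have h := Real.smul_map_volume_mul_right (a := d⁻¹) (by positivity)
  conv_rhs => rw [← h]
  rw [lintegral_smul_measure, lintegral_map hg (by fun_prop), mul_comm]
  simp [div_eq_mul_inv, abs_of_pos hd]

lemma aux_meas (n : ℕ) (f : (i : Fin n) → (Fin i → ℝ) → ℝ) (hf : ∀ i, Measurable (f i))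
    (d : Fin n → ℝ) : Measurable (Tmap n f d) := by
  unfold Tmap
  refine measurable_pi_lambda _ fun i => ?_
  have := hf i
  exact ((measurable_pi_apply i).sub
    ((hf i).comp (measurable_pi_lambda _ fun j => measurable_pi_apply _))).div_const _

lemma aux_main (n : ℕ) : ∀ (f : (i : Fin n) → (Fin i → ℝ) → ℝ) (_ : ∀ i, Measurable (f i))
    (d : Fin n → ℝ) (_ : ∀ i, 0 < d i) (g : Fin n → ℝ → ENNReal) (_ : ∀ i, Measurable (g i)),
    ∫⁻ y : Fin n → ℝ, ∏ i, (g i (Tmap n f d y i) * ENNReal.ofReal (1 / d i))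
      = ∏ i, ∫⁻ x, g i x := by
  induction n with
  | zero => intro f hf d hd g hg; simp [volume_pi]
  | succ n ih =>
    intro f hf d hd g hg
    let f' : (i : Fin n) → (Fin i → ℝ) → ℝ := fun i => f i.castSucc
    let fl : (Fin n → ℝ) → ℝ := f (Fin.last n)
    have hfl : Measurable fl := hf (Fin.last n)
    have hf' : ∀ i, Measurable (f' i) := fun i => hf i.castSucc
    have hT := aux_meas n f' hf' (fun i => d i.castSucc)
    let G : ℝ × (Fin n → ℝ) → ENNReal := fun p =>
      (∏ i : Fin n, (g i.castSucc (Tmap n f' (fun i => d i.castSucc) p.2 i)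
        * ENNReal.ofReal (1 / d i.castSucc))) *
      (g (Fin.last n) ((p.1 - fl p.2) / d (Fin.last n)) * ENNReal.ofReal (1 / d (Fin.last n)))
    have hP : Measurable fun y : Fin n → ℝ =>
        ∏ i : Fin n, (g i.castSucc (Tmap n f' (fun i => d i.castSucc) y i)
        * ENNReal.ofReal (1 / d i.castSucc)) := by
      refine Finset.measurable_prod _ fun i _ => ?_
      exact ((hg i.castSucc).comp ((measurable_pi_apply i).comp hT)).mul_const _
    have hG : Measurable G := by
      refine (hP.comp measurable_snd).mul (Measurable.mul_const ?_ _)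
      exact (hg _).comp ((measurable_fst.sub (hfl.comp measurable_snd)).div_const _)
    have hmp := volume_preserving_piFinSuccAbove (fun _ : Fin (n + 1) => ℝ) (Fin.last n)
    have hE : ∀ y : Fin (n + 1) → ℝ,
        ∏ i, (g i (Tmap (n + 1) f d y i) * ENNReal.ofReal (1 / d i))
        = G (MeasurableEquiv.piFinSuccAbove (fun _ : Fin (n + 1) => ℝ) (Fin.last n) y) := by
      intro y
      have h2 : MeasurableEquiv.piFinSuccAbove (fun _ : Fin (n + 1) => ℝ) (Fin.last n) y
          = (y (Fin.last n), fun i => y i.castSucc) := by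
        ext i
        · rfl
        · simp [MeasurableEquiv.piFinSuccAbove, Fin.insertNthEquiv, Fin.removeNth, Fin.init]
      rw [h2, Fin.prod_univ_castSucc]
      rfl
    simp_rw [hE]
    rw [hmp.lintegral_comp hG]
    change ∫⁻ p, G p ∂((volume : Measure ℝ).prod (volume : Measure (Fin n → ℝ))) = _
    rw [lintegral_prod_symm' _ hG]
    have hI : ∀ y : Fin n → ℝ, ∫⁻ x, G (x, y) =
        (∏ i : Fin n, (g i.castSucc (Tmap n f' (fun i => d i.castSucc) y i)
        * ENNReal.ofReal (1 / d i.castSucc))) * ∫⁻ x, g (Fin.last n) x := by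
      intro y
      rw [← aux_one _ (hg (Fin.last n)) (fl y) _ (hd (Fin.last n))]
      have := hg (Fin.last n)
      have hm : Measurable fun x : ℝ => g (Fin.last n) ((x - fl y) / d (Fin.last n))
          * ENNReal.ofReal (1 / d (Fin.last n)) := by fun_prop
      rw [← lintegral_const_mul _ hm]
    simp_rw [hI]
    rw [lintegral_mul_const _ hP, Fin.prod_univ_castSucc]
    rw [ih f' hf' (fun i => d i.castSucc) (fun i => hd _) (fun i => g i.castSucc)
      (fun i => hg _)]

lemma aux_pdf (x : ℝ) : stdNormalPDF x = ProbabilityTheory.gaussianPDFReal 0 1 x := by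
  simp [stdNormalPDF, ProbabilityTheory.gaussianPDFReal]

/-- Density factorization of the triangular transport model: if each
`f_i` is Borel measurable and each `d_i > 0`, and `μ` is the measure on `ℝ^L` with
Lebesgue density `p(y) = ∏_{i=1}^L φ((y_i − f_i(y_1, …, y_{i−1}))/d_i)/d_i`, then the
pushforward of `μ` under the lower-triangular transport map `T` equals the
`L`-dimensional standard Gaussian measure (the product of `L` copies of `N(0,1)`). -/
theorem transport_map_density_factorization (L : ℕ) (hL : 1 ≤ L)
    (f : (i : Fin L) → (Fin i → ℝ) → ℝ) (hf : ∀ i, Measurable (f i))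
    (hf1 : ∀ v : Fin ((⟨0, hL⟩ : Fin L) : ℕ) → ℝ, f ⟨0, hL⟩ v = 0)
    (d : Fin L → ℝ) (hd : ∀ i, 0 < d i) :
    Measure.map (Tmap L f d)
      ((volume : Measure (Fin L → ℝ)).withDensity fun y =>
        ENNReal.ofReal (∏ i : Fin L,
          stdNormalPDF ((y i - f i (fun j => y ⟨j.1, lt_trans j.2 i.2⟩)) / d i) / d i))
      = Measure.pi (fun _ : Fin L => ProbabilityTheory.gaussianReal 0 1) := by
  have hT := aux_meas L f hf d
  symm
  refine Measure.pi_eq fun s hs => ?_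
  rw [Measure.map_apply hT (MeasurableSet.univ_pi hs),
    withDensity_apply _ (hT (MeasurableSet.univ_pi hs)),
    ← lintegral_indicator (hT (MeasurableSet.univ_pi hs))]
  have hm : ∀ i, Measurable ((s i).indicator (ProbabilityTheory.gaussianPDF 0 1)) := fun i =>
    (ProbabilityTheory.measurable_gaussianPDF 0 1).indicator (hs i)
  have key := aux_main L f hf d hd (fun i => (s i).indicator (ProbabilityTheory.gaussianPDF 0 1)) hm
  have hr : ∀ i, ∫⁻ x, (s i).indicator (ProbabilityTheory.gaussianPDF 0 1) x
      = ProbabilityTheory.gaussianReal 0 1 (s i) := by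
    intro i
    rw [lintegral_indicator (hs i), ProbabilityTheory.gaussianReal_apply _ one_ne_zero]
  simp_rw [hr] at key
  rw [← key]
  congr 1
  ext y
  by_cases hy : y ∈ Tmap L f d ⁻¹' Set.univ.pi s
  · rw [Set.indicator_of_mem hy, ENNReal.ofReal_prod_of_nonneg]
    · refine Finset.prod_congr rfl fun i _ => ?_
      have hi : Tmap L f d y i ∈ s i := hy i trivial
      rw [Set.indicator_of_mem hi, div_eq_mul_one_div, aux_pdf,
        ENNReal.ofReal_mul (ProbabilityTheory.gaussianPDFReal_nonneg _ _ _)]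
      rfl
    · intro i _
      rw [aux_pdf]
      exact div_nonneg (ProbabilityTheory.gaussianPDFReal_nonneg _ _ _) (hd i).le
  · rw [Set.indicator_of_notMem hy]
    have : ∃ i, Tmap L f d y i ∉ s i := by
      by_contra! h
      exact hy fun i _ => h i
    obtain ⟨i, hi⟩ := this
    symm
    apply Finset.prod_eq_zero (Finset.mem_univ i)
    rw [Set.indicator_of_notMem hi, zero_mul]

end
end

section
/- The pushforward of Lebesgue measure on ℝ under the map η ↦ (log(1 + exp(η)))² equals the Borel measure on ℝ with Lebesgue density p(s) = 1/(2·√s·(1 − exp(−√s))) for s > 0 and p(s) = 0 for s ≤ 0. -/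
open MeasureTheory

noncomputable section

/-- The softplus function `softplus(η) = log(1 + exp(η))`. -/
def softplus (η : ℝ) : ℝ := Real.log (1 + Real.exp η)

/-- The square of the softplus function, `η ↦ (log(1 + exp(η)))²`. -/
def softplusSq (η : ℝ) : ℝ := softplus η ^ 2

/-- The induced improper prior density: `p(s) = 1/(2·√s·(1 − exp(−√s)))` for `s > 0`
and `p(s) = 0` for `s ≤ 0`. -/
def inducedDensity (s : ℝ) : ℝ :=
  if 0 < s then 1 / (2 * Real.sqrt s * (1 - Real.exp (-Real.sqrt s))) else 0

theorem softplus_pos_aux (x : ℝ) : 0 < softplus x := by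
  unfold softplus
  exact Real.log_pos (by have := Real.exp_pos x; linarith)

theorem softplusSq_inj_aux : Function.Injective softplusSq := by
  intro x y h
  unfold softplusSq at h
  have h1 : softplus x = softplus y :=
    (pow_left_inj₀ (softplus_pos_aux x).le (softplus_pos_aux y).le (by norm_num)).1 h
  unfold softplus at h1
  have hx := Real.exp_pos x
  have hy := Real.exp_pos y
  have h2 := Real.log_injOn_pos (Set.mem_Ioi.2 (by linarith)) (Set.mem_Ioi.2 (by linarith)) h1
  exact Real.exp_injective (by linarith)

theorem softplusSq_surj_aux (s : ℝ) (hs : 0 < s) : ∃ x, softplusSq x = s := by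
  have h0 : 0 < Real.sqrt s := Real.sqrt_pos.2 hs
  have h1 : 1 < Real.exp (Real.sqrt s) := Real.one_lt_exp_iff.2 h0
  refine ⟨Real.log (Real.exp (Real.sqrt s) - 1), ?_⟩
  unfold softplusSq softplus
  rw [Real.exp_log (by linarith)]
  rw [add_sub_cancel, Real.log_exp, Real.sq_sqrt hs.le]

theorem softplusSq_deriv_aux (x : ℝ) :
    HasDerivAt softplusSq (2 * softplus x * (Real.exp x / (1 + Real.exp x))) x := by
  have hx := Real.exp_pos x
  have h1 : HasDerivAt softplus (Real.exp x / (1 + Real.exp x)) x :=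
    ((Real.hasDerivAt_exp x).const_add 1).log (by linarith)
  have h2 := h1.pow 2
  have h3 : softplus ^ 2 = softplusSq := rfl
  rw [h3] at h2
  simpa using h2

theorem density_aux (x : ℝ) :
    inducedDensity (softplusSq x) = (2 * softplus x * (Real.exp x / (1 + Real.exp x)))⁻¹ := by
  have hx := Real.exp_pos x
  have hp := softplus_pos_aux x
  unfold inducedDensity softplusSq
  rw [if_pos (by positivity), Real.sqrt_sq hp.le, one_div]
  congr 2
  rw [Real.exp_neg]
  have : Real.exp (softplus x) = 1 + Real.exp x := Real.exp_log (by linarith)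
  rw [this]
  field_simp
  ring

/-- The pushforward of Lebesgue measure on `ℝ` under the map
`η ↦ (log(1 + exp(η)))²` equals the Borel measure on `ℝ` with Lebesgue density
`p(s) = 1/(2·√s·(1 − exp(−√s)))` for `s > 0` and `p(s) = 0` for `s ≤ 0`. -/
theorem softplus_sq_pushforward :
    Measure.map softplusSq (volume : Measure ℝ)
      = (volume : Measure ℝ).withDensity fun s => ENNReal.ofReal (inducedDensity s) := by
  have hc : Continuous softplusSq :=
    continuous_iff_continuousAt.2 fun x => (softplusSq_deriv_aux x).continuousAt
  ext A hA
  rw [Measure.map_apply hc.measurable hA, withDensity_apply _ hA]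
  have hS : MeasurableSet (softplusSq ⁻¹' A) := hc.measurable hA
  have himg : softplusSq '' (softplusSq ⁻¹' A) = A ∩ Set.Ioi 0 := by
    ext s
    constructor
    · rintro ⟨x, hx, rfl⟩
      exact ⟨hx, pow_pos (softplus_pos_aux x) 2⟩
    · rintro ⟨hs, h0⟩
      obtain ⟨x, rfl⟩ := softplusSq_surj_aux s h0
      exact ⟨x, hs, rfl⟩
  have key := lintegral_image_eq_lintegral_abs_deriv_mul hS
    (fun x _ => (softplusSq_deriv_aux x).hasDerivWithinAt) softplusSq_inj_aux.injOn
    (fun s => ENNReal.ofReal (inducedDensity s))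
  rw [himg] at key
  have h1 : ∫⁻ s in A, ENNReal.ofReal (inducedDensity s)
      = ∫⁻ s in A ∩ Set.Ioi 0, ENNReal.ofReal (inducedDensity s) := by
    rw [← lintegral_indicator hA, ← lintegral_indicator (hA.inter measurableSet_Ioi)]
    congr 1
    ext s
    by_cases h : 0 < s <;> by_cases h' : s ∈ A <;> simp [h, h', inducedDensity]
  rw [h1, key, ← setLIntegral_one]
  congr 1
  ext x
  have hp : 0 < 2 * softplus x * (Real.exp x / (1 + Real.exp x)) := by
    have hx := Real.exp_pos x
    have hp := softplus_pos_aux x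
    positivity
  rw [density_aux, abs_of_pos hp, ← ENNReal.ofReal_mul hp.le, mul_inv_cancel₀ hp.ne',
    ENNReal.ofReal_one]

end
end
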